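/- arXiv:2010.08922 — 2 statements merged into one kernel-verified Lean document; each statement's English description precedes it below -/
import Mathlib

section
/- Let 1 ≤ S < n and λ > 0, and condition on an outcome of M_n for which there is a subset B ⊆ {1,…,n} of size n − S such that M_n[{S+1,…,n}, B] is λ-heavy. Then with probability at least 1 − 3S·2^{−S} − e^{−S/6}, there is a set B' of size n + 2S with {1,…,n} ⊆ B' ⊆ {1,…,n+3S} such that the matrix M_{n+3S}[{S+1,…,n+3S}, B'] is λ-heavy. -/
/-!
The matrix is grown from size `n` to size `N = n + 3S` one row (and column) at a time. At size `m`
the rows in play are `S ≤ i < m`, and a heavy column set `B ⊆ {0,…,m-1}` of size `m - S` is kept, so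
there are always exactly `S` unused columns `b < m`.

When the row `m` is revealed, `per M[A ∪ {m}, B ∪ {b}] = x_{m,b} · per M[A, B] + (terms without
x_{m,b'} for b' ∉ B)` for every unused column `b` (`permOn_insert_sub`). Hence, once the entries of
the row at the columns of `B` are fixed, at most one sign of `x_{m,b}` makes the new permanent
smaller than `λ` in absolute value, and these bad events are independent over `b`. So all columns
from a set `C` of unused ones are bad with probability at most `2^{-|C|}` (`card_fail_le`). With `C`
the set of all unused columns: the growth gets stuck with probability at most `2^{-S}` per step. With `C` a single
column below `n`: as long as some column below `n` is unused, such a column can be added with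
probability at least `1/2`.

The procedure therefore fails with probability at most `3S · 2^{-S} + P(Bin(3S, 1/2) < S)`. The
binomial tail is replaced by the exponential moment potential `tailPot`, which satisfies the
recursion needed for an induction on the number of remaining steps (`fail_bound`) and is at most
`e^{-S/6}` at the start (`tailPot_start`).
-/

open Finset

/-- The real number (`1` or `-1`) associated to a Boolean: a Rademacher value. -/
noncomputable def rad (b : Bool) : ℝ := if b then 1 else -1

/-- The permanent of the submatrix of `M` with row set `A` and column set `B`,
defined as a sum over all bijections between `A` and `B` (it equals `0` if
`A.card ≠ B.card`). Since the permanent is invariant under row and column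
permutations, this faithfully represents `per M[A,B]`. -/
noncomputable def permOn {m n : ℕ} (M : Matrix (Fin m) (Fin n) ℝ)
    (A : Finset (Fin m)) (B : Finset (Fin n)) : ℝ :=
  ∑ σ : {x // x ∈ A} ≃ {y // y ∈ B}, ∏ i : {x // x ∈ A}, M i.1 (σ i).1

/-- The random symmetric extension of a fixed `n' × n'` matrix `M` to an `n × n` matrix:
the top-left `n' × n'` block is `M`, and the remaining entries are Rademacher values
determined symmetrically by the Boolean data `ω`. As `ω` ranges uniformly over all Boolean
data, the new entries (on and above the diagonal) are i.i.d. Rademacher random variables. -/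
noncomputable def extSym {n' : ℕ} (n : ℕ) (M : Matrix (Fin n') (Fin n') ℝ)
    (ω : Fin n → Fin n → Bool) : Matrix (Fin n) (Fin n) ℝ :=
  fun i j =>
    if h : (i : ℕ) < n' ∧ (j : ℕ) < n' then M ⟨i, h.1⟩ ⟨j, h.2⟩
    else if i ≤ j then rad (ω i j) else rad (ω j i)

open Classical in
/-- The probability of the event `P` for the random symmetric extension of `M` to size `n`
(i.e. conditionally on the outcome `M` for the top-left block). -/
noncomputable def probExt {n' : ℕ} (n : ℕ) (M : Matrix (Fin n') (Fin n') ℝ)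
    (P : Matrix (Fin n) (Fin n) ℝ → Prop) : ℝ :=
  ((univ.filter fun ω : Fin n → Fin n → Bool => P (extSym n M ω)).card : ℝ) / 2 ^ (n * n)

/-! ### Permanents of submatrices -/

lemma permOn_congr {m n : ℕ} {X Y : Matrix (Fin m) (Fin n) ℝ} {A : Finset (Fin m)}
    {B : Finset (Fin n)} (h : ∀ i ∈ A, ∀ j ∈ B, X i j = Y i j) : permOn X A B = permOn Y A B := by
  unfold permOn
  refine Finset.sum_congr rfl fun σ _ => Finset.prod_congr rfl fun i _ => ?_
  exact h _ i.2 _ (σ i).2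

lemma permOn_map {m n m' n' : ℕ} (X : Matrix (Fin m) (Fin n) ℝ) (Y : Matrix (Fin m') (Fin n') ℝ)
    (f : Fin m ↪ Fin m') (g : Fin n ↪ Fin n') (h : ∀ i j, Y (f i) (g j) = X i j)
    (A : Finset (Fin m)) (B : Finset (Fin n)) :
    permOn Y (A.map f) (B.map g) = permOn X A B := by
  unfold permOn
  rw [← Equiv.sum_comp (Equiv.equivCongr (A.equivMap f) (B.equivMap g))]
  refine Finset.sum_congr rfl fun σ _ => ?_
  rw [← Equiv.prod_comp (A.equivMap f)]
  refine Finset.prod_congr rfl fun i _ => ?_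
  simp only [Equiv.equivCongr_apply_apply, Equiv.symm_apply_apply]
  exact h _ _

/-- The bijections `insert a A ≃ insert b B` sending `a` to `b` are the bijections `A ≃ B`. -/
lemma sum_equiv_insert {m n : ℕ} (X : Matrix (Fin m) (Fin n) ℝ) {A : Finset (Fin m)}
    {B : Finset (Fin n)} {a : Fin m} {b : Fin n} (ha : a ∉ A) (hb : b ∉ B) :
    (∑ σ : {x // x ∈ insert a A} ≃ {y // y ∈ insert b B},
      if (σ ⟨a, mem_insert_self a A⟩).1 = b then ∏ i : {x // x ∈ insert a A}, X i.1 (σ i).1 else 0)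
      = X a b * permOn X A B := by
  classical
  unfold permOn
  rw [← Finset.sum_filter, Finset.mul_sum]
  symm
  let eA : {x // x ∈ insert a A} ≃ Option {x // x ∈ A} := Finset.subtypeInsertEquivOption ha
  let eB : {x // x ∈ insert b B} ≃ Option {x // x ∈ B} := Finset.subtypeInsertEquivOption hb
  have eA0 : eA ⟨a, mem_insert_self a A⟩ = none := by
    simp [eA, Finset.subtypeInsertEquivOption]
  have eB0 : eB ⟨b, mem_insert_self b B⟩ = none := by
    simp [eB, Finset.subtypeInsertEquivOption]
  have eA0' : eA.symm none = ⟨a, mem_insert_self a A⟩ := by rw [← eA0]; simp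
  have eB0' : eB.symm none = ⟨b, mem_insert_self b B⟩ := by rw [← eB0]; simp
  have eA1 : ∀ i : {x // x ∈ A}, (eA.symm (some i)).1 = i.1 := fun i => by
    simp [eA, Finset.subtypeInsertEquivOption]
  have eB1 : ∀ i : {x // x ∈ B}, (eB.symm (some i)).1 = i.1 := fun i => by
    simp [eB, Finset.subtypeInsertEquivOption]
  refine Finset.sum_bij' (fun σ _ => (eA.trans (Equiv.optionCongr σ)).trans eB.symm)
    (fun τ _ => Equiv.removeNone ((eA.symm.trans τ).trans eB)) ?_ ?_ ?_ ?_ ?_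
  · intro σ _
    simp [eA0, eB0']
  · intro τ _
    simp
  · intro σ _
    ext1 x
    have : ((eA.symm.trans ((eA.trans (Equiv.optionCongr σ)).trans eB.symm)).trans eB)
        = Equiv.optionCongr σ := by
      ext1 x; simp
    rw [this, Equiv.removeNone_optionCongr]
  · intro τ hτ
    have hτ' : τ ⟨a, mem_insert_self a A⟩ = ⟨b, mem_insert_self b B⟩ :=
      Subtype.ext (by simpa using hτ)
    have : Equiv.optionCongr (Equiv.removeNone ((eA.symm.trans τ).trans eB))
        = (eA.symm.trans τ).trans eB := by
      have hnone : ((eA.symm.trans τ).trans eB) none = none := by simp [eA0', hτ', eB0]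
      ext1 x
      cases x with
      | none => rw [hnone]; simp
      | some x =>
        refine Equiv.removeNone_some _ (Option.ne_none_iff_exists'.1 fun h => ?_)
        rw [← hnone] at h
        exact Option.some_ne_none _ (Equiv.injective _ h)
    rw [this]
    ext1 x
    simp
  · intro σ _
    rw [← Equiv.prod_comp eA.symm, Fintype.prod_option]
    congr 1
    · simp [eA0', eA0, eB0']
    · refine Finset.prod_congr rfl fun i _ => ?_
      simp [eA1, eB1]

/-- If two matrices agree except at the entry `(a, b)`, the permanents differ by the difference of
these entries times the complementary minor. -/
lemma permOn_insert_sub {m n : ℕ} {X Y : Matrix (Fin m) (Fin n) ℝ} {A : Finset (Fin m)}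
    {B : Finset (Fin n)} {a : Fin m} {b : Fin n} (ha : a ∉ A) (hb : b ∉ B)
    (hA : ∀ i ∈ A, ∀ j ∈ insert b B, X i j = Y i j) (hrow : ∀ j ∈ B, X a j = Y a j) :
    permOn X (insert a A) (insert b B) - permOn Y (insert a A) (insert b B)
      = (X a b - Y a b) * permOn X A B := by
  have hAB : permOn X A B = permOn Y A B :=
    permOn_congr fun i hi j hj => hA i hi j (mem_insert_of_mem hj)
  rw [sub_mul]
  nth_rewrite 2 [hAB]
  rw [← sum_equiv_insert X ha hb, ← sum_equiv_insert Y ha hb]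
  unfold permOn
  rw [← Finset.sum_sub_distrib, ← Finset.sum_sub_distrib]
  refine Finset.sum_congr rfl fun σ _ => ?_
  split_ifs with h
  · rfl
  · rw [sub_zero, sub_eq_zero]
    refine Finset.prod_congr rfl fun i _ => ?_
    have hσ := (σ i).2
    rcases mem_insert.1 i.2 with hi | hi
    · have : i = ⟨a, mem_insert_self a A⟩ := Subtype.ext hi
      rw [hi]
      refine hrow _ ?_
      rcases mem_insert.1 hσ with h' | h'
      · rw [this] at h'; exact absurd h' h
      · exact h'
    · exact hA _ hi _ hσ

/-! ### One growth step -/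

lemma abs_rad_sub {s t : Bool} (h : s ≠ t) : |rad s - rad t| = 2 := by
  cases s <;> cases t <;> simp_all [rad] <;> norm_num

open Classical in
/-- With the row `a` given by the random signs `v`, the probability that no column `b ∈ C` extends
the heavy pair `(A, B)` is at most `2^{-|C|}`: a bad `v` is determined by its restriction to the
complement of `C`. -/
lemma card_fail_le {N : ℕ} {lam : ℝ} (X : (Fin N → Bool) → Matrix (Fin N) (Fin N) ℝ)
    (X₀ : Matrix (Fin N) (Fin N) ℝ) {A B C : Finset (Fin N)} {a : Fin N}
    (ha : a ∉ A) (hBC : ∀ b ∈ C, b ∉ B)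
    (hA : ∀ v, ∀ i ∈ A, ∀ j ∈ B ∪ C, X v i j = X₀ i j)
    (hrow : ∀ v, ∀ j ∈ B ∪ C, X v a j = rad (v j))
    (hheavy : lam ≤ |permOn X₀ A B|) :
    ((univ.filter fun v : Fin N → Bool =>
      ∀ b ∈ C, ¬ lam ≤ |permOn (X v) (insert a A) (insert b B)|).card : ℝ)
      ≤ 2 ^ N * (1 / 2 : ℝ) ^ C.card := by
  have key : (univ.filter fun v : Fin N → Bool =>
      ∀ b ∈ C, ¬ lam ≤ |permOn (X v) (insert a A) (insert b B)|).card
      ≤ Fintype.card ({j // j ∈ Cᶜ} → Bool) := by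
    rw [← Finset.card_univ]
    refine Finset.card_le_card_of_injOn (fun v j => v j.1) (fun _ _ => mem_coe.2 (mem_univ _)) ?_
    intro v hv w hw hvw
    simp only [coe_filter, mem_univ, true_and, Set.mem_ofPred_eq] at hv hw
    have hout : ∀ j, j ∉ C → v j = w j := fun j hj =>
      congrFun hvw ⟨j, mem_compl.2 hj⟩
    funext b
    by_contra hne
    have hbC : b ∈ C := by
      by_contra h
      exact hne (hout b h)
    have hsub : insert b B ⊆ B ∪ C := by
      intro j hj
      rcases mem_insert.1 hj with rfl | hj
      · exact mem_union_right _ hbC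
      · exact mem_union_left _ hj
    have hd := permOn_insert_sub (X := X v) (Y := X w) ha (hBC b hbC)
      (fun i hi j hj => by rw [hA v i hi j (hsub hj), hA w i hi j (hsub hj)])
      (fun j hj => by
        rw [hrow v j (mem_union_left _ hj), hrow w j (mem_union_left _ hj),
          hout j fun hjC => hBC j hjC hj])
    rw [hrow v b (mem_union_right _ hbC), hrow w b (mem_union_right _ hbC),
      permOn_congr (Y := X₀) fun i hi j hj => hA v i hi j (mem_union_left _ hj)] at hd
    have hd' := congrArg abs hd
    rw [abs_mul, abs_rad_sub hne] at hd'
    have h1 := not_le.1 (hv b hbC)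
    have h2 := not_le.1 (hw b hbC)
    have h3 := abs_sub (permOn (X v) (insert a A) (insert b B))
      (permOn (X w) (insert a A) (insert b B))
    linarith
  have hcard : Fintype.card ({j // j ∈ Cᶜ} → Bool) = 2 ^ (N - C.card) := by
    simp
  rw [hcard] at key
  have hCN : C.card ≤ N := by simpa using card_le_univ C
  calc _ ≤ ((2 ^ (N - C.card) : ℕ) : ℝ) := by exact_mod_cast key
    _ = _ := by
      rw [one_div, inv_pow, Nat.cast_pow, Nat.cast_ofNat, pow_sub₀ _ (by norm_num) hCN]

/-! ### The tail potential -/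

/-- An upper bound for `P(Bin(r, 1/2) < d)` coming from the exponential moment with parameter
`2/3`; it is set to `0` for `d = 0`, where the event is impossible. -/
noncomputable def tailPot (r d : ℕ) : ℝ :=
  if d = 0 then 0 else Real.exp (2 / 3 * d) * ((1 + Real.exp (-(2 / 3))) / 2) ^ r

lemma tailPot_zero (r : ℕ) : tailPot r 0 = 0 := by simp [tailPot]

lemma tailPot_nonneg (r d : ℕ) : 0 ≤ tailPot r d := by
  unfold tailPot
  split_ifs <;> positivity

lemma tailPot_mono (r : ℕ) {d e : ℕ} (h : d ≤ e) : tailPot r d ≤ tailPot r e := by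
  by_cases hd : d = 0
  · subst hd
    rw [tailPot_zero]
    exact tailPot_nonneg _ _
  · have he : e ≠ 0 := by omega
    simp only [tailPot, hd, he, if_false]
    gcongr

lemma one_le_tailPot {d : ℕ} (h : d ≠ 0) : 1 ≤ tailPot 0 d := by
  simp only [tailPot, h, if_false, pow_zero, mul_one]
  exact Real.one_le_exp (by positivity)

lemma tailPot_step (r d : ℕ) :
    tailPot r d + 1 / 2 * (tailPot r (d + 1) - tailPot r d) ≤ tailPot (r + 1) (d + 1) := by
  have h : tailPot r d ≤ Real.exp (2 / 3 * d) * ((1 + Real.exp (-(2 / 3))) / 2) ^ r := by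
    unfold tailPot
    split_ifs
    · positivity
    · exact le_rfl
  have e : Real.exp (2 / 3 * d) = Real.exp (2 / 3 * (d + 1 : ℕ)) * Real.exp (-(2 / 3)) := by
    rw [← Real.exp_add]
    congr 1
    push_cast
    ring
  have h1 : ∀ s, tailPot s (d + 1)
      = Real.exp (2 / 3 * (d + 1 : ℕ)) * ((1 + Real.exp (-(2 / 3))) / 2) ^ s := fun s => by
    simp [tailPot]
  rw [h1, h1, pow_succ]
  rw [e] at h
  linarith

lemma tailPot_start (S : ℕ) : tailPot (3 * S) S ≤ Real.exp (-(S : ℝ) / 6) := by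
  have hc : (1 + Real.exp (-(2 / 3))) / 2 ≤ Real.exp (-(5 / 18)) := by
    have h := Real.cosh_le_exp_half_sq (1 / 3)
    have e : (1 + Real.exp (-(2 / 3))) / 2 = Real.exp (-(1 / 3)) * Real.cosh (1 / 3) := by
      rw [Real.cosh_eq, mul_div_assoc', mul_add, ← Real.exp_add, ← Real.exp_add]
      norm_num
    calc _ = Real.exp (-(1 / 3)) * Real.cosh (1 / 3) := e
      _ ≤ Real.exp (-(1 / 3)) * Real.exp ((1 / 3) ^ 2 / 2) := by gcongr
      _ = Real.exp (-(5 / 18)) := by rw [← Real.exp_add]; norm_num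
  by_cases hS : S = 0
  · subst hS
    rw [tailPot_zero]
    positivity
  · simp only [tailPot, hS, if_false]
    calc _ ≤ Real.exp (2 / 3 * S) * Real.exp (-(5 / 18)) ^ (3 * S) := by gcongr
      _ = Real.exp (-(S : ℝ) / 6) := by
        rw [← Real.exp_nat_mul, ← Real.exp_add]
        congr 1
        push_cast
        ring

/-! ### Revealing the random signs column by column -/

/-- The signs `ω` with column `k` replaced by `v`. In `extSym`, column `k` of the Boolean data
supplies the entries of row and column `k` of the matrix up to the diagonal. -/
def updCol {N : ℕ} (ω : Fin N → Fin N → Bool) (k : Fin N) (v : Fin N → Bool) :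
    Fin N → Fin N → Bool := fun i j => if j = k then v i else ω i j

/-- The signs with columns below `m` taken from `ω₀` (already revealed) and the remaining ones
from `ω`. -/
def combine {N : ℕ} (m : ℕ) (ω₀ ω : Fin N → Fin N → Bool) : Fin N → Fin N → Bool :=
  fun i j => if (j : ℕ) < m then ω₀ i j else ω i j

lemma combine_updCol {N : ℕ} (k : Fin N) (ω₀ ω : Fin N → Fin N → Bool) (v : Fin N → Bool) :
    combine k ω₀ (updCol ω k v) = combine (k + 1) (updCol ω₀ k v) ω := by
  funext i j
  simp only [combine, updCol, Fin.ext_iff]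
  split_ifs <;> first | rfl | omega

/-- Resampling one column does not change an average. -/
lemma sum_updCol {N : ℕ} (k : Fin N) (F : (Fin N → Fin N → Bool) → ℝ) :
    ∑ v : Fin N → Bool, ∑ ω, F (updCol ω k v) = 2 ^ N * ∑ ω, F ω := by
  have hinv : Function.Involutive
      (fun p : (Fin N → Bool) × (Fin N → Fin N → Bool) =>
        ((fun i => p.2 i k, updCol p.2 k p.1) : (Fin N → Bool) × (Fin N → Fin N → Bool))) := by
    rintro ⟨v, ω⟩
    refine Prod.ext ?_ ?_
    · funext i; simp [updCol]
    · funext i j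
      by_cases h : j = k <;> simp [updCol, h]
  have h := Equiv.sum_comp hinv.toPerm
    (fun p : (Fin N → Bool) × (Fin N → Fin N → Bool) => F p.2)
  rw [Fintype.sum_prod_type, Fintype.sum_prod_type] at h
  simp only [Function.Involutive.coe_toPerm] at h
  rw [h]
  simp

lemma extSym_updCol_of_lt {n N : ℕ} (M : Matrix (Fin n) (Fin n) ℝ) (ω : Fin N → Fin N → Bool)
    (k : Fin N) (v : Fin N → Bool) {i j : Fin N} (hi : i < k) (hj : j < k) :
    extSym N M (updCol ω k v) i j = extSym N M ω i j := by
  simp [extSym, updCol, hi.ne, hj.ne]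

lemma extSym_updCol_row {n N : ℕ} (M : Matrix (Fin n) (Fin n) ℝ) (ω : Fin N → Fin N → Bool)
    (k : Fin N) (hk : n ≤ k) (v : Fin N → Bool) {j : Fin N} (hj : j < k) :
    extSym N M (updCol ω k v) k j = rad (v j) := by
  simp [extSym, updCol, hj.not_ge, hk.not_gt]

/-- The top-left block being fixed, the signs in columns below `n` are irrelevant. -/
lemma extSym_combine {n N : ℕ} (M : Matrix (Fin n) (Fin n) ℝ) (ω₀ ω : Fin N → Fin N → Bool) :
    extSym N M (combine n ω₀ ω) = extSym N M ω := by
  funext i j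
  simp only [extSym, combine]
  split_ifs <;> first | rfl | (simp only [Fin.le_def] at *; omega)

/-! ### Induction on the number of remaining steps -/

/-- The event that some admissible column set of the final matrix is `lam`-heavy. -/
def Covered (N n S : ℕ) (lam : ℝ) (M' : Matrix (Fin N) (Fin N) ℝ) : Prop :=
  ∃ B' : Finset (Fin N), B'.card = N - S ∧ (∀ i : Fin N, (i : ℕ) < n → i ∈ B') ∧
    lam ≤ |permOn M' (univ.filter fun i : Fin N => S ≤ (i : ℕ)) B'|

open Classical in
/-- The number of ways (as a real number) to choose the signs so that, with the columns below `m`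
as in `ω₀`, the final matrix is not covered. -/
noncomputable def failCount (N n S : ℕ) (lam : ℝ) (M : Matrix (Fin n) (Fin n) ℝ) (m : ℕ)
    (ω₀ : Fin N → Fin N → Bool) : ℝ :=
  ∑ ω : Fin N → Fin N → Bool, if Covered N n S lam (extSym N M (combine m ω₀ ω)) then 0 else 1

lemma failCount_le (N n S : ℕ) (lam : ℝ) (M : Matrix (Fin n) (Fin n) ℝ) (m : ℕ)
    (ω₀ : Fin N → Fin N → Bool) : failCount N n S lam M m ω₀ ≤ 2 ^ (N * N) := by
  classical
  unfold failCount
  calc _ ≤ ∑ ω : Fin N → Fin N → Bool, (1 : ℝ) := by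
        refine Finset.sum_le_sum fun ω _ => ?_
        split_ifs <;> norm_num
    _ = 2 ^ (N * N) := by simp [pow_mul]

lemma sum_failCount_succ (N n S : ℕ) (lam : ℝ) (M : Matrix (Fin n) (Fin n) ℝ) (k : Fin N)
    (ω₀ : Fin N → Fin N → Bool) :
    2 ^ N * failCount N n S lam M k ω₀
      = ∑ v : Fin N → Bool, failCount N n S lam M (k + 1) (updCol ω₀ k v) := by
  classical
  unfold failCount
  rw [← sum_updCol k]
  simp only [combine_updCol]

/-- The number of columns below `n` that are not in `B`. -/
def missing {N : ℕ} (n : ℕ) (B : Finset (Fin N)) : ℕ :=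
  (univ.filter fun i : Fin N => (i : ℕ) < n ∧ i ∉ B).card

lemma missing_insert_le {N : ℕ} (n : ℕ) (B : Finset (Fin N)) (b : Fin N) :
    missing n (insert b B) ≤ missing n B := by
  unfold missing
  refine card_le_card fun i => ?_
  simp only [mem_filter, mem_univ, true_and, mem_insert, not_or]
  tauto

lemma missing_insert_lt {N : ℕ} (n : ℕ) (B : Finset (Fin N)) {b : Fin N} (hb : (b : ℕ) < n)
    (hbB : b ∉ B) : missing n (insert b B) + 1 ≤ missing n B := by
  unfold missing
  refine Nat.succ_le_of_lt (card_lt_card ?_)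
  refine (Finset.ssubset_iff_of_subset fun i => ?_).2 ⟨b, ?_, ?_⟩
  · simp only [mem_filter, mem_univ, true_and, mem_insert, not_or]
    tauto
  · simp [hb, hbB]
  · simp

/-- From a heavy column set `B` for the first `m` rows, with `r` steps to go, the growth procedure
fails with probability at most `r · 2^{-S} + tailPot r (missing n B)`. -/
lemma fail_bound {N n S : ℕ} {lam : ℝ} (M : Matrix (Fin n) (Fin n) ℝ) (hSn : S < n) (r : ℕ) :
    ∀ (m : ℕ), m + r = N → n ≤ m → ∀ (ω₀ : Fin N → Fin N → Bool) (B : Finset (Fin N)),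
      B.card = m - S → (∀ b ∈ B, (b : ℕ) < m) →
      lam ≤ |permOn (extSym N M ω₀) (univ.filter fun i : Fin N => S ≤ (i : ℕ) ∧ (i : ℕ) < m) B| →
      failCount N n S lam M m ω₀
        ≤ 2 ^ (N * N) * (r * (1 / 2 : ℝ) ^ S + tailPot r (missing n B)) := by
  classical
  induction r with
  | zero =>
    intro m hm hnm ω₀ B hBc hBm hB
    obtain rfl : m = N := by omega
    by_cases hd : missing n B = 0
    · have hcov : Covered m n S lam (extSym m M ω₀) := by
        refine ⟨B, hBc, fun i hi => ?_, ?_⟩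
        · by_contra hiB
          have : i ∈ univ.filter fun i : Fin m => (i : ℕ) < n ∧ i ∉ B := by simp [hi, hiB]
          rw [missing, card_eq_zero] at hd
          rw [hd] at this
          simp at this
        · simpa using hB
      have hcomb : ∀ ω, combine m ω₀ ω = ω₀ := fun ω => by
        funext i j; simp [combine]
      simp [failCount, hcomb, hcov, hd, tailPot_zero]
    · refine (failCount_le ..).trans ?_
      have := one_le_tailPot hd
      have h2 : (0 : ℝ) ≤ 2 ^ (m * m) := by positivity
      simp only [Nat.cast_zero, zero_mul, zero_add]
      nlinarith
  | succ r ih =>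
    intro m hm hnm ω₀ B hBc hBm hB
    let k : Fin N := ⟨m, by omega⟩
    set A := univ.filter fun i : Fin N => S ≤ (i : ℕ) ∧ (i : ℕ) < m with hAdef
    let C := univ.filter fun j : Fin N => (j : ℕ) < m ∧ j ∉ B
    have hAm : ∀ i ∈ A, i < k := fun i hi => by
      simp only [hAdef, mem_filter] at hi
      exact hi.2.2
    have hkA : k ∉ A := fun h => lt_irrefl _ (hAm k h)
    have hAk : insert k A = univ.filter fun i : Fin N => S ≤ (i : ℕ) ∧ (i : ℕ) < m + 1 := by
      ext i
      simp only [hAdef, mem_insert, mem_filter, mem_univ, true_and, Fin.ext_iff, k]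
      omega
    have hCc : C.card = S := by
      have h1 : C = (univ.filter fun j : Fin N => (j : ℕ) < m) \ B := by
        ext j; simp [C]
      have h2 : (univ.filter fun j : Fin N => (j : ℕ) < m).card = m := by
        rw [Fin.card_filter_val_lt]
        omega
      rw [h1, card_sdiff_of_subset (fun b hb => by simp [hBm b hb]), h2, hBc]
      omega
    let good (v : Fin N → Bool) (b : Fin N) : Prop :=
      lam ≤ |permOn (extSym N M (updCol ω₀ k v)) (insert k A) (insert b B)|
    -- A set of unused columns is entirely useless with probability at most `2^{-|C'|}`.
    have hbad : ∀ C' ⊆ C, ((univ.filter fun v => ∀ b ∈ C', ¬ good v b).card : ℝ)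
        ≤ 2 ^ N * (1 / 2 : ℝ) ^ C'.card := by
      intro C' hC'
      have hlt : ∀ j ∈ B ∪ C', j < k := by
        intro j hj
        rcases mem_union.1 hj with hj | hj
        · exact hBm j hj
        · have := hC' hj
          simp only [C, mem_filter] at this
          exact this.2.1
      refine card_fail_le (fun v => extSym N M (updCol ω₀ k v)) (extSym N M ω₀) hkA ?_ ?_ ?_ hB
      · intro b hb
        have := hC' hb
        simp only [C, mem_filter] at this
        exact this.2.2
      · intro v i hi j hj
        exact extSym_updCol_of_lt M ω₀ k v (hAm i hi) (hlt j hj)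
      · intro v j hj
        exact extSym_updCol_row M ω₀ k hnm v (hlt j hj)
    -- The induction hypothesis, applied after adding a column that keeps the permanent heavy.
    have hnext : ∀ v, ∀ b ∈ C, good v b → failCount N n S lam M (m + 1) (updCol ω₀ k v)
        ≤ 2 ^ (N * N) * (r * (1 / 2 : ℝ) ^ S + tailPot r (missing n (insert b B))) := by
      intro v b hb hg
      simp only [C, mem_filter, mem_univ, true_and] at hb
      refine ih (m + 1) (by omega) (by omega) _ _ ?_ ?_ ?_
      · rw [card_insert_of_notMem hb.2, hBc]
        omega
      · intro j hj
        rcases mem_insert.1 hj with rfl | hj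
        · omega
        · have := hBm j hj
          omega
      · rw [← hAk]
        exact hg
    have hK : (0 : ℝ) < 2 ^ (N * N) := by positivity
    have hr : (0 : ℝ) ≤ r * (1 / 2 : ℝ) ^ S := by positivity
    have hsum := sum_failCount_succ N n S lam M k ω₀
    have hcardV : ((univ : Finset (Fin N → Bool)).card : ℝ) = 2 ^ N := by simp
    have h2N : (0 : ℝ) < 2 ^ N := by positivity
    have hbadC := hbad C Subset.rfl
    rw [hCc] at hbadC
    refine le_of_mul_le_mul_left ?_ h2N
    rw [show (m : ℕ) = (k : ℕ) from rfl, hsum]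
    by_cases hd : missing n B = 0
    · have hpt : ∀ v, failCount N n S lam M (k + 1) (updCol ω₀ k v)
          ≤ 2 ^ (N * N) * (r * (1 / 2 : ℝ) ^ S + if ∀ b ∈ C, ¬ good v b then 1 else 0) := by
        intro v
        split_ifs with h
        · refine (failCount_le ..).trans ?_
          nlinarith
        · push Not at h
          obtain ⟨b, hb, hg⟩ := h
          have h0 : missing n (insert b B) = 0 := by
            have := missing_insert_le n B b
            omega
          have := hnext v b hb hg
          rwa [h0, tailPot_zero] at this
      refine (Finset.sum_le_sum fun v _ => hpt v).trans ?_
      rw [← Finset.mul_sum, Finset.sum_add_distrib, Finset.sum_const, nsmul_eq_mul, hcardV,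
        Finset.sum_boole, hd, tailPot_zero, mul_left_comm (2 ^ N) (2 ^ (N * N))]
      refine mul_le_mul_of_nonneg_left ?_ hK.le
      push_cast
      linarith
    · obtain ⟨d, hd'⟩ := Nat.exists_eq_succ_of_ne_zero hd
      obtain ⟨b₀, hb₀⟩ := card_pos.1 (Nat.pos_of_ne_zero hd)
      simp only [mem_filter, mem_univ, true_and] at hb₀
      have hb₀C : b₀ ∈ C := by
        simp only [C, mem_filter, mem_univ, true_and]
        exact ⟨by omega, hb₀.2⟩
      have hbad₀ := hbad {b₀} (by simpa using hb₀C)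
      simp only [mem_singleton, forall_eq, card_singleton, pow_one] at hbad₀
      have hmono : tailPot r d ≤ tailPot r (d + 1) := tailPot_mono r (Nat.le_succ d)
      have hnn := tailPot_nonneg r d
      -- The column `b₀ < n` is preferred; any other usable column is the fallback.
      have hpt : ∀ v, failCount N n S lam M (k + 1) (updCol ω₀ k v)
          ≤ 2 ^ (N * N) * ((r * (1 / 2 : ℝ) ^ S + tailPot r d
            + (tailPot r (d + 1) - tailPot r d) * if ¬ good v b₀ then 1 else 0)
            + if ∀ b ∈ C, ¬ good v b then 1 else 0) := by
        intro v
        by_cases h0 : good v b₀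
        · refine (hnext v b₀ hb₀C h0).trans (mul_le_mul_of_nonneg_left ?_ hK.le)
          have h1 : tailPot r (missing n (insert b₀ B)) ≤ tailPot r d := by
            refine tailPot_mono r ?_
            have := missing_insert_lt n B hb₀.1 hb₀.2
            omega
          rw [if_neg (not_not.2 h0), if_neg fun h => h b₀ hb₀C h0]
          linarith
        · rw [if_pos h0]
          split_ifs with h
          · refine (failCount_le ..).trans ?_
            have : (1 : ℝ) ≤ (r * (1 / 2 : ℝ) ^ S + tailPot r d
              + (tailPot r (d + 1) - tailPot r d) * 1) + 1 := by linarith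
            nlinarith
          · push Not at h
            obtain ⟨b, hb, hg⟩ := h
            refine (hnext v b hb hg).trans (mul_le_mul_of_nonneg_left ?_ hK.le)
            have h1 : tailPot r (missing n (insert b B)) ≤ tailPot r (d + 1) := by
              refine tailPot_mono r ?_
              have := missing_insert_le n B b
              omega
            linarith
      refine (Finset.sum_le_sum fun v _ => hpt v).trans ?_
      rw [← Finset.mul_sum, Finset.sum_add_distrib, Finset.sum_add_distrib, Finset.sum_const,
        nsmul_eq_mul, hcardV, ← Finset.mul_sum, Finset.sum_boole, Finset.sum_boole, hd',
        mul_left_comm (2 ^ N) (2 ^ (N * N))]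
      refine mul_le_mul_of_nonneg_left ?_ hK.le
      have hstep := mul_le_mul_of_nonneg_left (tailPot_step r d) h2N.le
      have hb' := mul_le_mul_of_nonneg_left hbad₀ (sub_nonneg.2 hmono)
      push_cast
      rw [Nat.succ_eq_add_one]
      nlinarith

/-- Iterative covering step: let `1 ≤ S < n` and `λ > 0`, and condition on a symmetric `±1`
outcome of `M_n` having a subset `B` of size `n - S` such that `M_n[{S+1,…,n}, B]` is
`λ`-heavy. Then with probability at least `1 - 3S·2^(-S) - e^(-S/6)` over the random
extension to size `n + 3S`, there is a set `B'` of size `n + 2S` with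
`{1,…,n} ⊆ B' ⊆ {1,…,n+3S}` such that `M_{n+3S}[{S+1,…,n+3S}, B']` is `λ`-heavy. -/
theorem iterative_cover (n S : ℕ) (hS1 : 1 ≤ S) (hSn : S < n) (lam : ℝ) (hlam : 0 < lam)
    (M : Matrix (Fin n) (Fin n) ℝ) (hsym : M.IsSymm)
    (hsign : ∀ i j, M i j = 1 ∨ M i j = -1)
    (hB : ∃ B : Finset (Fin n), B.card = n - S ∧
      lam ≤ |permOn M (univ.filter fun i : Fin n => S ≤ (i : ℕ)) B|) :
    1 - 3 * (S : ℝ) * (1 / 2 : ℝ) ^ S - Real.exp (-(S : ℝ) / 6) ≤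
      probExt (n + 3 * S) M fun M' => ∃ B' : Finset (Fin (n + 3 * S)),
        B'.card = n + 2 * S ∧ (∀ i : Fin (n + 3 * S), (i : ℕ) < n → i ∈ B') ∧
        lam ≤ |permOn M' (univ.filter fun i : Fin (n + 3 * S) => S ≤ (i : ℕ)) B'| := by
  classical
  obtain ⟨B, hBc, hB⟩ := hB
  let f : Fin n ↪ Fin (n + 3 * S) := Fin.castLEEmb (by omega)
  have hf : ∀ i, ((f i : Fin (n + 3 * S)) : ℕ) = i := fun i => rfl
  let ω₀ : Fin (n + 3 * S) → Fin (n + 3 * S) → Bool := fun _ _ => false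
  have hmap : (univ.filter fun i : Fin (n + 3 * S) => S ≤ (i : ℕ) ∧ (i : ℕ) < n)
      = (univ.filter fun i : Fin n => S ≤ (i : ℕ)).map f := by
    ext i
    simp only [mem_filter, mem_univ, true_and, mem_map]
    constructor
    · rintro ⟨h1, h2⟩
      exact ⟨⟨i, h2⟩, h1, Fin.ext rfl⟩
    · rintro ⟨j, hj, rfl⟩
      rw [hf]
      exact ⟨hj, j.2⟩
  have hmiss : missing n (B.map f) = S := by
    have h1 : (univ.filter fun i : Fin (n + 3 * S) => (i : ℕ) < n ∧ i ∉ B.map f) = Bᶜ.map f := by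
      ext i
      simp only [mem_filter, mem_univ, true_and, mem_map, mem_compl]
      constructor
      · rintro ⟨h1, h2⟩
        exact ⟨⟨i, h1⟩, fun h => h2 ⟨_, h, Fin.ext rfl⟩, Fin.ext rfl⟩
      · rintro ⟨j, hj, rfl⟩
        refine ⟨by rw [hf]; exact j.2, ?_⟩
        rintro ⟨l, hl, hlj⟩
        exact hj (f.injective hlj ▸ hl)
    rw [missing, h1, card_map, card_compl, Fintype.card_fin, hBc]
    omega
  have key := fail_bound (N := n + 3 * S) (S := S) (lam := lam) M hSn (3 * S) n rfl le_rfl ω₀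
    (B.map f) (by rw [card_map, hBc])
    (by
      intro b hb
      obtain ⟨j, -, rfl⟩ := mem_map.1 hb
      rw [hf]
      exact j.2)
    (by
      rw [hmap, permOn_map M (extSym (n + 3 * S) M ω₀) f f
        (fun i j => by simp [extSym, hf])]
      exact hB)
  rw [hmiss] at key
  have hstart := tailPot_start S
  have hK : (0 : ℝ) < 2 ^ ((n + 3 * S) * (n + 3 * S)) := by positivity
  have hcount : failCount (n + 3 * S) n S lam M n ω₀
      = 2 ^ ((n + 3 * S) * (n + 3 * S))
        - ((univ.filter fun ω : Fin (n + 3 * S) → Fin (n + 3 * S) → Bool =>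
          Covered (n + 3 * S) n S lam (extSym (n + 3 * S) M ω)).card : ℝ) := by
    have hone : ∀ p : Prop, (if p then (0 : ℝ) else 1) = 1 - if p then 1 else 0 := fun p => by
      split_ifs <;> norm_num
    unfold failCount
    simp only [extSym_combine, hone, Finset.sum_sub_distrib, Finset.sum_boole]
    simp [pow_mul]
  have hev : ∀ M' : Matrix (Fin (n + 3 * S)) (Fin (n + 3 * S)) ℝ,
      Covered (n + 3 * S) n S lam M' ↔ ∃ B' : Finset (Fin (n + 3 * S)),
        B'.card = n + 2 * S ∧ (∀ i : Fin (n + 3 * S), (i : ℕ) < n → i ∈ B') ∧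
        lam ≤ |permOn M' (univ.filter fun i : Fin (n + 3 * S) => S ≤ (i : ℕ)) B'| := fun M' => by
    rw [Covered, show n + 3 * S - S = n + 2 * S by omega]
  simp only [← hev]
  unfold probExt
  rw [le_div_iff₀ hK]
  rw [hcount] at key
  push_cast at key
  have := mul_le_mul_of_nonneg_left hstart hK.le
  convert (show _ ≤ ((univ.filter fun ω : Fin (n + 3 * S) → Fin (n + 3 * S) → Bool =>
          Covered (n + 3 * S) n S lam (extSym (n + 3 * S) M ω)).card : ℝ) from ?_)
  linarith
end

section
/- Let L ≥ 1, let M be a symmetric n×n matrix with ±1 entries, let λ > 0, and let A_1,…,A_m,B_1,…,B_m be complement-disjoint subsets of {1,…,n} of size n − L such that |per M[A_ℓ,B_ℓ]| ≥ λ for all ℓ = 1,…,m. Then there exist quadruples (A*_ℓ, B*_ℓ, i_ℓ, j_ℓ) for ℓ = 1,…,m such that: (1) A*_ℓ, B*_ℓ ⊆ {1,…,n} with |A*_ℓ| = |B*_ℓ| = n − L + 1, and i_ℓ, j_ℓ ∈ A*_ℓ ∩ B*_ℓ with i_ℓ ≠ j_ℓ; (2) the 2m elements i_1, j_1, …, i_m,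 j_m of {1,…,n} are distinct; (3) the sets A*_1, B*_1, …, A*_m, B*_m are complement-disjoint in {1,…,n}; (4) for each ℓ, |per M[A*_ℓ,B*_ℓ]^{(i_ℓ,j_ℓ)} + per M[A*_ℓ,B*_ℓ]^{(j_ℓ,i_ℓ)}| ≥ λ/2 (equivalently, viewing per M'[A*_ℓ ∪ {n+1}, B*_ℓ ∪ {n+1}] as a polynomial in the entries x_1,…,x_n of a new symmetric row and column appended to M, the coefficient of x_{i_ℓ}x_{j_ℓ} has absolute value at least λ/2). -/
/-!
For fixed `ℓ` put `U = Aᶜ ∪ Bᶜ`, a disjoint union of two sets of size `L`, and for `X ⊆ U` of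
size `L` let `f X = per M[Xᶜ, (U \ X)ᶜ]`, so that `f (Aᶜ) = per M[A, B]`. If `Z ⊆ U` has size
`L - 1` and `a ≠ b` lie in `U \ Z`, then `A* = Zᶜ`, `B* = (U \ (Z ∪ {a, b}))ᶜ`, `i = a`, `j = b`
is an admissible quadruple whose sum of permanents is `f (Z ∪ {a}) + f (Z ∪ {b})`
(`quadruple_of_pair`).

It remains to find a pair for which this sum is at least `λ / 2` in absolute value
(`exists_quadruple`). If `L = 1`, then `f {a} = f {b}` since `M` is symmetric. If `L ≥ 2`, write
`Aᶜ = Z ∪ {a}` and take distinct `b, c ∈ Bᶜ`; for `x, y, w` the values of `f` at `Z ∪ {a}`,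
`Z ∪ {b}`, `Z ∪ {c}` we have `2 x = (x + y) + (x + w) - (y + w)`, and `|x| ≥ λ`, so one of the
three sums is at least `2 λ / 3` in absolute value.

Since all chosen indices and complements stay inside `U`, and the sets `U` for different `ℓ` are
disjoint, the choices for different `ℓ` do not interfere.
-/

open Finset

/-- A family of subsets of `{1,…,n}` is complement-disjoint if the complements of its
members are pairwise disjoint. -/
def cdisj {n : ℕ} {ι : Type*} (S : ι → Finset (Fin n)) : Prop :=
  ∀ i j : ι, i ≠ j → Disjoint (S i)ᶜ (S j)ᶜ

theorem permOn_comm {n : ℕ} {M : Matrix (Fin n) (Fin n) ℝ} (hsym : M.IsSymm)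
    (A B : Finset (Fin n)) : permOn M A B = permOn M B A := by
  unfold permOn
  refine Fintype.sum_equiv ⟨Equiv.symm, Equiv.symm, fun _ => rfl, fun _ => rfl⟩ _ _ fun σ => ?_
  refine Fintype.prod_equiv σ _ _ fun x => ?_
  simp [hsym.apply]

/-- The requirements on a single quadruple `(A', B', i, j)`, together with the condition that
the indices and the complements of `A'` and `B'` lie in `U`. -/
def IsQuadruple {n : ℕ} (M : Matrix (Fin n) (Fin n) ℝ) (k : ℕ) (μ : ℝ) (U : Finset (Fin n))
    (A' B' : Finset (Fin n)) (i j : Fin n) : Prop :=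
  A'.card = k ∧ B'.card = k ∧ i ∈ A' ∩ B' ∧ j ∈ A' ∩ B' ∧ i ≠ j ∧ Disjoint A'ᶜ B'ᶜ ∧
    A'ᶜ ⊆ U ∧ B'ᶜ ⊆ U ∧ i ∈ U ∧ j ∈ U ∧
    μ ≤ |permOn M (A'.erase i) (B'.erase j) + permOn M (A'.erase j) (B'.erase i)|

/-- Two `L`-subsets of `U` that differ by exchanging `a` for `b` give a quadruple as soon as the
sum of their two permanents is large. -/
theorem quadruple_of_pair {n L : ℕ} (hL : 1 ≤ L) (hLn : L < n)
    (M : Matrix (Fin n) (Fin n) ℝ) (μ : ℝ) (U Z : Finset (Fin n)) (a b : Fin n)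
    (hU : U.card = 2 * L) (hZ : Z.card = L - 1) (hZU : Z ⊆ U)
    (ha : a ∈ U) (hb : b ∈ U) (haZ : a ∉ Z) (hbZ : b ∉ Z) (hab : a ≠ b)
    (hμ : μ ≤ |permOn M (insert a Z)ᶜ (U \ insert a Z)ᶜ +
      permOn M (insert b Z)ᶜ (U \ insert b Z)ᶜ|) :
    ∃ A' B' i j, IsQuadruple M (n - L + 1) μ U A' B' i j := by
  have hsub : insert a (insert b Z) ⊆ U := by
    intro x hx
    simp only [mem_insert] at hx
    rcases hx with rfl | rfl | hx
    exacts [ha, hb, hZU hx]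
  have hcard : (insert a (insert b Z)).card = L + 1 := by
    rw [card_insert_of_notMem (by simp [hab, haZ]), card_insert_of_notMem hbZ, hZ]
    omega
  refine ⟨Zᶜ, (U \ insert a (insert b Z))ᶜ, a, b, ?_, ?_, ?_, ?_, hab, ?_, ?_, ?_, ha, hb, ?_⟩
  · rw [card_compl, Fintype.card_fin, hZ]
    omega
  · rw [card_compl, Fintype.card_fin, card_sdiff_of_subset hsub, hcard, hU]
    omega
  · simp [haZ]
  · simp [hbZ]
  · rw [compl_compl, compl_compl, disjoint_left]
    intro x hx
    simp [hx]
  · simpa using hZU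
  · rw [compl_compl]
    exact sdiff_subset
  · have h1 : Zᶜ.erase a = (insert a Z)ᶜ := by ext; simp
    have h2 : Zᶜ.erase b = (insert b Z)ᶜ := by ext; simp
    have h3 : (U \ insert a (insert b Z))ᶜ.erase b = (U \ insert a Z)ᶜ := by
      ext x; by_cases hxb : x = b
      · subst hxb; simp [hb, hbZ, hab.symm]
      · simp [hxb]
    have h4 : (U \ insert a (insert b Z))ᶜ.erase a = (U \ insert b Z)ᶜ := by
      ext x; by_cases hxa : x = a
      · subst hxa; simp [ha, haZ, hab]
      · simp [hxa]
    rwa [h1, h2, h3, h4]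

theorem exists_quadruple {n L : ℕ} (hL : 1 ≤ L) (hLn : L < n)
    {M : Matrix (Fin n) (Fin n) ℝ} (hsym : M.IsSymm) {lam : ℝ} (hlam : 0 < lam)
    {A B : Finset (Fin n)} (hAB : Disjoint Aᶜ Bᶜ) (hA : A.card = n - L) (hB : B.card = n - L)
    (hheavy : lam ≤ |permOn M A B|) :
    ∃ A' B' i j, IsQuadruple M (n - L + 1) (lam / 2) (Aᶜ ∪ Bᶜ) A' B' i j := by
  have hAc : Aᶜ.card = L := by rw [card_compl, Fintype.card_fin]; omega
  have hBc : Bᶜ.card = L := by rw [card_compl, Fintype.card_fin]; omega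
  have hU : (Aᶜ ∪ Bᶜ).card = 2 * L := by rw [card_union_of_disjoint hAB]; omega
  have hBU : ((Aᶜ ∪ Bᶜ) \ Aᶜ)ᶜ = B := by
    rw [union_sdiff_cancel_left hAB, compl_compl]
  obtain ⟨a, ha⟩ : Aᶜ.Nonempty := card_pos.1 (by omega)
  have hins : insert a (Aᶜ.erase a) = Aᶜ := insert_erase ha
  have hZ : (Aᶜ.erase a).card = L - 1 := by rw [card_erase_of_mem ha, hAc]
  have hZU : Aᶜ.erase a ⊆ Aᶜ ∪ Bᶜ := (erase_subset _ _).trans subset_union_left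
  have haU : a ∈ Aᶜ ∪ Bᶜ := mem_union_left _ ha
  have haZ : a ∉ Aᶜ.erase a := notMem_erase _ _
  have hbU : ∀ b ∈ Bᶜ, b ∈ Aᶜ ∪ Bᶜ := fun b hb => mem_union_right _ hb
  have hbZ : ∀ b ∈ Bᶜ, b ∉ Aᶜ.erase a := fun b hb h =>
    disjoint_left.1 hAB (mem_of_mem_erase h) hb
  have hab : ∀ b ∈ Bᶜ, a ≠ b := by
    rintro b hb rfl
    exact disjoint_left.1 hAB ha hb
  rcases hL.eq_or_lt with h1 | h2
  · obtain ⟨b, hb⟩ := card_eq_one.1 (hBc.trans h1.symm)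
    have hbB : b ∈ Bᶜ := by simp [hb]
    have hZ0 : Aᶜ.erase a = ∅ := card_eq_zero.1 (by omega)
    refine quadruple_of_pair hL hLn M _ _ _ a b hU hZ hZU haU (hbU b hbB) haZ (hbZ b hbB)
      (hab b hbB) ?_
    have hbins : insert b (Aᶜ.erase a) = Bᶜ := by rw [hZ0, hb]; rfl
    have hAU : ((Aᶜ ∪ Bᶜ) \ Bᶜ)ᶜ = A := by
      rw [union_sdiff_cancel_right hAB, compl_compl]
    rw [hins, hbins, hBU, hAU, compl_compl, compl_compl, permOn_comm hsym B A, ← two_mul, abs_mul,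
      abs_two]
    linarith
  · obtain ⟨b, hb, c, hc, hbc⟩ := one_lt_card.1 (hBc.symm ▸ h2 : 1 < Bᶜ.card)
    by_contra hno
    have key : ∀ x y, x ∈ Aᶜ ∪ Bᶜ → y ∈ Aᶜ ∪ Bᶜ → x ∉ Aᶜ.erase a → y ∉ Aᶜ.erase a → x ≠ y →
        |permOn M (insert x (Aᶜ.erase a))ᶜ ((Aᶜ ∪ Bᶜ) \ insert x (Aᶜ.erase a))ᶜ +
          permOn M (insert y (Aᶜ.erase a))ᶜ ((Aᶜ ∪ Bᶜ) \ insert y (Aᶜ.erase a))ᶜ| < lam / 2 :=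
      fun x y hx hy hxZ hyZ hxy => lt_of_not_ge fun h =>
        hno (quadruple_of_pair hL hLn M _ _ _ x y hU hZ hZU hx hy hxZ hyZ hxy h)
    have kab := key a b haU (hbU b hb) haZ (hbZ b hb) (hab b hb)
    have kac := key a c haU (hbU c hc) haZ (hbZ c hc) (hab c hc)
    have kbc := key b c (hbU b hb) (hbU c hc) (hbZ b hb) (hbZ c hc) hbc
    rw [hins, hBU, compl_compl] at kab kac
    rw [abs_lt] at kab kac kbc
    rcases le_abs.1 hheavy with h | h <;> linarith

/-- Construction of the quadruples `(A*_ℓ, B*_ℓ, i_ℓ, j_ℓ)`: given complement-disjoint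
subsets `A_1, …, A_m, B_1, …, B_m` of `{1,…,n}` of size `n - L` (with `1 ≤ L < n`) such
that each `|per M[A_ℓ, B_ℓ]| ≥ λ` for a symmetric `±1` matrix `M`, there exist sets
`A*_ℓ, B*_ℓ` of size `n - L + 1` and distinct indices `i_ℓ, j_ℓ ∈ A*_ℓ ∩ B*_ℓ`, with all
`2m` indices distinct and the `2m` sets complement-disjoint, such that
`|per M[A*_ℓ,B*_ℓ]^{(i_ℓ,j_ℓ)} + per M[A*_ℓ,B*_ℓ]^{(j_ℓ,i_ℓ)}| ≥ λ/2` for every `ℓ`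
(here `per M[A,B]^{(i,j)} = per M[A \ {i}, B \ {j}]`). -/
theorem quadruple_construction (n m L : ℕ) (hL : 1 ≤ L) (hLn : L < n)
    (M : Matrix (Fin n) (Fin n) ℝ) (hsym : M.IsSymm)
    (hsign : ∀ i j, M i j = 1 ∨ M i j = -1) (lam : ℝ) (hlam : 0 < lam)
    (A B : Fin m → Finset (Fin n)) (hcd : cdisj (Sum.elim A B))
    (hA : ∀ ℓ, (A ℓ).card = n - L) (hB : ∀ ℓ, (B ℓ).card = n - L)
    (hheavy : ∀ ℓ, lam ≤ |permOn M (A ℓ) (B ℓ)|) :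
    ∃ (A' B' : Fin m → Finset (Fin n)) (i j : Fin m → Fin n),
      (∀ ℓ, (A' ℓ).card = n - L + 1) ∧ (∀ ℓ, (B' ℓ).card = n - L + 1) ∧
      (∀ ℓ, i ℓ ∈ A' ℓ ∩ B' ℓ) ∧ (∀ ℓ, j ℓ ∈ A' ℓ ∩ B' ℓ) ∧ (∀ ℓ, i ℓ ≠ j ℓ) ∧
      Function.Injective (Sum.elim i j) ∧
      cdisj (Sum.elim A' B') ∧
      (∀ ℓ, lam / 2 ≤
        |permOn M ((A' ℓ).erase (i ℓ)) ((B' ℓ).erase (j ℓ)) +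
          permOn M ((A' ℓ).erase (j ℓ)) ((B' ℓ).erase (i ℓ))|) := by
  have hcompl : ∀ ℓ, Disjoint (A ℓ)ᶜ (B ℓ)ᶜ := fun ℓ =>
    hcd (Sum.inl ℓ) (Sum.inr ℓ) Sum.inl_ne_inr
  have hUU : ∀ k ℓ, k ≠ ℓ → Disjoint ((A k)ᶜ ∪ (B k)ᶜ) ((A ℓ)ᶜ ∪ (B ℓ)ᶜ) := by
    intro k ℓ hkl
    rw [disjoint_union_left, disjoint_union_right, disjoint_union_right]
    exact ⟨⟨hcd (Sum.inl k) (Sum.inl ℓ) (by simpa using hkl),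
        hcd (Sum.inl k) (Sum.inr ℓ) Sum.inl_ne_inr⟩,
      hcd (Sum.inr k) (Sum.inl ℓ) Sum.inr_ne_inl,
      hcd (Sum.inr k) (Sum.inr ℓ) (by simpa using hkl)⟩
  choose A' B' i j hA' hB' hi hj hij hd hAU hBU hiU hjU hsum using fun ℓ =>
    exists_quadruple hL hLn hsym hlam (hcompl ℓ) (hA ℓ) (hB ℓ) (hheavy ℓ)
  have hne : ∀ {k ℓ : Fin m} {x : Fin n}, x ∈ (A k)ᶜ ∪ (B k)ᶜ → x ∈ (A ℓ)ᶜ ∪ (B ℓ)ᶜ → k = ℓ := by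
    intro k ℓ x hk hl
    by_contra h
    exact disjoint_left.1 (hUU k ℓ h) hk hl
  refine ⟨A', B', i, j, hA', hB', hi, hj, hij, ?_, ?_, hsum⟩
  · rintro (k | k) (ℓ | ℓ) h <;> simp only [Sum.elim_inl, Sum.elim_inr] at h
    · rw [hne (hiU k) (h ▸ hiU ℓ)]
    · obtain rfl := hne (hiU k) (h ▸ hjU ℓ)
      exact absurd h (hij k)
    · obtain rfl := hne (hjU k) (h ▸ hiU ℓ)
      exact absurd h.symm (hij k)
    · rw [hne (hjU k) (h ▸ hjU ℓ)]
  · rintro (k | k) (ℓ | ℓ) h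
    · exact (hUU k ℓ (by simpa using h)).mono (hAU k) (hAU ℓ)
    · by_cases hkl : k = ℓ
      · subst hkl
        exact hd k
      · exact (hUU k ℓ hkl).mono (hAU k) (hBU ℓ)
    · by_cases hkl : k = ℓ
      · subst hkl
        exact (hd k).symm
      · exact (hUU k ℓ hkl).mono (hBU k) (hAU ℓ)
    · exact (hUU k ℓ (by simpa using h)).mono (hBU k) (hBU ℓ)
end
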